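/- Regard the normalizing constants h_k = h_k(t) as functions of t on the interval (γ, ∞) (with γ > 0 and the integer m ≥ 0 fixed). Then for every N ≥ 1 the Toda equation holds: (d²/dt²) ln ( ∏_{k=0}^{N−1} h_k(t) ) = 4 · h_N(t) / h_{N−1}(t). -/

import Mathlib

open scoped Classical

namespace SixVertex

/-- The discrete weight `w(x) = (e^{-2(t-γ)(x+m+1)} - e^{-2(t+γ)(x+m+1)}) ∏_{k=1}^m (x+k)`
on the nonnegative integers. -/
noncomputable def wfun (t γ : ℝ) (m : ℕ) (x : ℕ) : ℝ :=
  (Real.exp (-2 * (t - γ) * ((x : ℝ) + m + 1)) - Real.exp (-2 * (t + γ) * ((x : ℝ) + m + 1)))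
    * ∏ k ∈ Finset.Icc 1 m, ((x : ℝ) + k)

/-- The Meixner weight `w^M(x) = e^{-2(t-γ)(x+m+1)} ∏_{k=1}^m (x+k)` on the
nonnegative integers. -/
noncomputable def wM (t γ : ℝ) (m : ℕ) (x : ℕ) : ℝ :=
  Real.exp (-2 * (t - γ) * ((x : ℝ) + m + 1)) * ∏ k ∈ Finset.Icc 1 m, ((x : ℝ) + k)

/-- `IsMonicOPS w p h` says that `(p k)` is the system of monic orthogonal polynomials
on the nonnegative integers for the discrete weight `w`, with normalizing constants
`h k > 0`: each `p k` is monic of degree `k` and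
`Σ_{x=0}^∞ p j (x) p k (x) w(x) = h k δ_{jk}` (the sums converging absolutely). -/
def IsMonicOPS (w : ℕ → ℝ) (p : ℕ → Polynomial ℝ) (h : ℕ → ℝ) : Prop :=
  (∀ k, (p k).Monic ∧ (p k).natDegree = k) ∧ (∀ k, 0 < h k) ∧
    ∀ j k, HasSum (fun x : ℕ => (p j).eval (x : ℝ) * (p k).eval (x : ℝ) * w x)
      (if j = k then h k else 0)

open Polynomial in
/-- The linear functional attached to the weight. -/
noncomputable def Lf (γ : ℝ) (m : ℕ) (t : ℝ) (f : ℝ[X]) : ℝ :=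
  ∑' x : ℕ, f.eval (x : ℝ) * wfun t γ m x

/-- The operator giving the `t`-derivative. -/
noncomputable def Qp (m : ℕ) : Polynomial ℝ :=
  Polynomial.C (-2) * (Polynomial.X + Polynomial.C ((m : ℝ) + 1))

theorem wfun_eq (t γ : ℝ) (m x : ℕ) : wfun t γ m x = Real.exp (-2 * t * ((x : ℝ) + m + 1)) *
    ((Real.exp (2 * γ * ((x : ℝ) + m + 1)) - Real.exp (-2 * γ * ((x : ℝ) + m + 1)))
    * ∏ k ∈ Finset.Icc 1 m, ((x : ℝ) + k)) := by
  unfold wfun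
  rw [← mul_assoc, mul_sub (Real.exp _), ← Real.exp_add, ← Real.exp_add]
  ring_nf

theorem wfun_nonneg (t γ : ℝ) (m x : ℕ) (hγ : 0 < γ) : 0 ≤ wfun t γ m x := by
  unfold wfun
  apply mul_nonneg
  · rw [sub_nonneg]
    apply Real.exp_le_exp.2
    have : (0 : ℝ) ≤ (x : ℝ) + m + 1 := by positivity
    nlinarith [mul_nonneg hγ.le this]
  · exact Finset.prod_nonneg (fun k _ => by positivity)

theorem wfun_anti (s t γ : ℝ) (m x : ℕ) (hγ : 0 < γ) (hst : s ≤ t) :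
    wfun t γ m x ≤ wfun s γ m x := by
  have h0 := wfun_nonneg 0 γ m x hγ
  rw [wfun_eq] at h0
  have h1 := nonneg_of_mul_nonneg_right h0 (Real.exp_pos _)
  rw [wfun_eq, wfun_eq]
  apply mul_le_mul_of_nonneg_right _ h1
  apply Real.exp_le_exp.2
  have : (0 : ℝ) ≤ (x : ℝ) + m + 1 := by positivity
  nlinarith [mul_le_mul_of_nonneg_right hst this]

theorem wfun_deriv (t γ : ℝ) (m x : ℕ) :
    HasDerivAt (fun s => wfun s γ m x) ((Qp m).eval (x : ℝ) * wfun t γ m x) t := by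
  simp only [wfun_eq]
  have h1 : HasDerivAt (fun s : ℝ => -2 * s * ((x : ℝ) + m + 1)) (-2 * 1 * ((x : ℝ) + m + 1)) t :=
    ((hasDerivAt_id t).const_mul (-2)).mul_const _
  have h2 := h1.exp.mul_const
    ((Real.exp (2 * γ * ((x : ℝ) + m + 1)) - Real.exp (-2 * γ * ((x : ℝ) + m + 1)))
    * ∏ k ∈ Finset.Icc 1 m, ((x : ℝ) + k))
  refine h2.congr_deriv ?_
  simp [Qp]
  ring

section alg
open Polynomial

/-- expansion in a monic basis -/
theorem expand (p : ℕ → ℝ[X]) (hp : ∀ k, (p k).Monic ∧ (p k).natDegree = k) (n : ℕ) :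
    ∀ f : ℝ[X], (∀ i, n ≤ i → f.coeff i = 0) →
      ∃ a : ℕ → ℝ, f = ∑ j ∈ Finset.range n, C (a j) * p j := by
  induction n with
  | zero =>
    intro f hf
    exact ⟨0, by ext i; simp [hf i (Nat.zero_le i)]⟩
  | succ n ih =>
    intro f hf
    obtain ⟨a, ha⟩ := ih (f - C (f.coeff n) * p n) (by
      intro i hi
      rcases Nat.eq_or_lt_of_le hi with rfl | hi
      · have : (p n).coeff n = 1 := by
          have := (hp n).1.coeff_natDegree
          rwa [(hp n).2] at this
        simp [this]
      · have : (p n).coeff i = 0 := coeff_eq_zero_of_natDegree_lt (by rw [(hp n).2]; exact hi)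
        simp [this, hf i hi])
    refine ⟨fun j => if j = n then f.coeff n else a j, ?_⟩
    rw [Finset.sum_range_succ]
    have : ∑ j ∈ Finset.range n, C (if j = n then f.coeff n else a j) * p j
        = ∑ j ∈ Finset.range n, C (a j) * p j := by
      apply Finset.sum_congr rfl
      intro j hj
      have := (Finset.mem_range.1 hj).ne
      simp [this]
    rw [this, ← ha]
    simp

variable {γ : ℝ} {m : ℕ} {t : ℝ} {q : ℕ → ℝ[X]} {g : ℕ → ℝ}

theorem q_coeff_self (H : IsMonicOPS (wfun t γ m) q g) (n : ℕ) : (q n).coeff n = 1 := by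
  have := (H.1 n).1.coeff_natDegree
  rwa [(H.1 n).2] at this

theorem q_coeff_lt (H : IsMonicOPS (wfun t γ m) q g) (n i : ℕ) (hi : n < i) :
    (q n).coeff i = 0 :=
  coeff_eq_zero_of_natDegree_lt (by rw [(H.1 n).2]; exact hi)

theorem L_summable (H : IsMonicOPS (wfun t γ m) q g) (f : ℝ[X]) :
    Summable (fun x : ℕ => f.eval (x : ℝ) * wfun t γ m x) := by
  obtain ⟨a, ha⟩ := expand q H.1 (f.natDegree + 1) f
    (fun i hi => coeff_eq_zero_of_natDegree_lt hi)
  have h0 : q 0 = 1 := by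
    exact (H.1 0).1.natDegree_eq_zero.1 (H.1 0).2
  have : ∀ j, Summable (fun x : ℕ => (q j).eval (x : ℝ) * wfun t γ m x) := by
    intro j
    have := (H.2.2 j 0).summable
    simpa [h0] using this
  have h2 : Summable (fun x : ℕ => ∑ j ∈ Finset.range (f.natDegree + 1),
      a j * ((q j).eval (x : ℝ) * wfun t γ m x)) :=
    summable_sum (fun j _ => (this j).mul_left _)
  refine h2.congr (fun x => ?_)
  conv_rhs => rw [ha]
  rw [eval_finsetSum, Finset.sum_mul]
  apply Finset.sum_congr rfl
  intro j _
  simp [mul_assoc]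

theorem L_add (H : IsMonicOPS (wfun t γ m) q g) (f f' : ℝ[X]) :
    Lf γ m t (f + f') = Lf γ m t f + Lf γ m t f' := by
  unfold Lf
  rw [← (L_summable H f).tsum_add (L_summable H f')]
  simp [add_mul]

theorem L_C (c : ℝ) (f : ℝ[X]) :
    Lf γ m t (C c * f) = c * Lf γ m t f := by
  unfold Lf
  rw [← tsum_mul_left]
  simp [mul_assoc]

theorem L_sub (H : IsMonicOPS (wfun t γ m) q g) (f f' : ℝ[X]) :
    Lf γ m t (f - f') = Lf γ m t f - Lf γ m t f' := by
  have := L_add H f (C (-1) * f')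
  rw [L_C] at this
  rw [show f - f' = f + C (-1) * f' by simp [sub_eq_add_neg], this]
  ring

theorem L_sum (H : IsMonicOPS (wfun t γ m) q g) (F : ℕ → ℝ[X]) (s : Finset ℕ) :
    Lf γ m t (∑ j ∈ s, F j) = ∑ j ∈ s, Lf γ m t (F j) := by
  induction s using Finset.induction_on with
  | empty => simp [Lf]
  | insert a s ha ih => rw [Finset.sum_insert ha, Finset.sum_insert ha, L_add H, ih]

theorem L_qq (H : IsMonicOPS (wfun t γ m) q g) (j k : ℕ) :
    Lf γ m t (q j * q k) = if j = k then g k else 0 := by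
  unfold Lf
  simp only [eval_mul]
  exact (H.2.2 j k).tsum_eq

theorem L_lt (H : IsMonicOPS (wfun t γ m) q g) (k : ℕ) (f : ℝ[X])
    (hf : ∀ i, k ≤ i → f.coeff i = 0) : Lf γ m t (f * q k) = 0 := by
  obtain ⟨a, ha⟩ := expand q H.1 k f hf
  rw [ha, Finset.sum_mul, L_sum H]
  apply Finset.sum_eq_zero
  intro j hj
  rw [mul_assoc, L_C, L_qq H, if_neg (Finset.mem_range.1 hj).ne, mul_zero]

theorem L_le (H : IsMonicOPS (wfun t γ m) q g) (k : ℕ) (f : ℝ[X])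
    (hf : ∀ i, k < i → f.coeff i = 0) : Lf γ m t (f * q k) = f.coeff k * g k := by
  have h1 := L_lt H k (f - C (f.coeff k) * q k) (by
    intro i hi
    rcases Nat.eq_or_lt_of_le hi with rfl | hi
    · simp [q_coeff_self H]
    · simp [q_coeff_lt H k i hi, hf i hi])
  rw [sub_mul, L_sub H, mul_assoc, L_C, L_qq H] at h1
  simp at h1
  linarith

/-- Gram-Schmidt formula -/
theorem gram (H : IsMonicOPS (wfun t γ m) q g) (n : ℕ) :
    q n = X ^ n - ∑ j ∈ Finset.range n, C (Lf γ m t (X ^ n * q j) / g j) * q j := by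
  obtain ⟨a, ha⟩ := expand q H.1 n (X ^ n - q n) (by
    intro i hi
    rcases Nat.eq_or_lt_of_le hi with rfl | hi
    · simp [q_coeff_self H]
    · simp [q_coeff_lt H n i hi, coeff_X_pow, hi.ne'])
  have key : ∀ j ∈ Finset.range n, a j = Lf γ m t (X ^ n * q j) / g j := by
    intro j hj
    have hjn := Finset.mem_range.1 hj
    have h1 : Lf γ m t ((X ^ n - q n) * q j) = a j * g j := by
      rw [ha, Finset.sum_mul, L_sum H, Finset.sum_eq_single j]
      · rw [mul_assoc, L_C, L_qq H, if_pos rfl]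
      · intro i _ hi
        rw [mul_assoc, L_C, L_qq H, if_neg hi, mul_zero]
      · intro h; exact absurd hj h
    rw [sub_mul, L_sub H, L_qq H, if_neg hjn.ne', sub_zero] at h1
    rw [h1, mul_div_cancel_right₀ _ (H.2.1 j).ne']
  have : ∑ j ∈ Finset.range n, C (Lf γ m t (X ^ n * q j) / g j) * q j = X ^ n - q n := by
    rw [ha]
    exact Finset.sum_congr rfl (fun j hj => by rw [key j hj])
  rw [this]; ring

end alg

section ana
open Polynomial Filter Topology

/-- `F` is a family of polynomials of bounded degree, differentiable coefficientwise at a point. -/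
def PD (F : ℝ → ℝ[X]) (F' : ℝ[X]) (t : ℝ) : Prop :=
  (∀ i, HasDerivAt (fun s => (F s).coeff i) (F'.coeff i) t) ∧
    ∃ n, ∀ᶠ s in 𝓝 t, (F s).natDegree ≤ n

theorem PD.mul {F G : ℝ → ℝ[X]} {F' G' : ℝ[X]} {t : ℝ} (hF : PD F F' t) (hG : PD G G' t) :
    PD (fun s => F s * G s) (F' * G t + F t * G') t := by
  refine ⟨fun i => ?_, ?_⟩
  · simp only [coeff_add, coeff_mul, ← Finset.sum_add_distrib]
    exact HasDerivAt.fun_sum (fun a _ => (hF.1 a.1).mul (hG.1 a.2))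
  · obtain ⟨n, hn⟩ := hF.2
    obtain ⟨k, hk⟩ := hG.2
    refine ⟨n + k, ?_⟩
    filter_upwards [hn, hk] with s h1 h2
    exact natDegree_mul_le.trans (add_le_add h1 h2)

theorem PD.const (f : ℝ[X]) (t : ℝ) : PD (fun _ => f) 0 t :=
  ⟨fun i => by simpa using hasDerivAt_const t (f.coeff i), f.natDegree, by simp⟩

/-- Existence of the derivative polynomial. -/
theorem PD.exists {F : ℝ → ℝ[X]} {t : ℝ} (n : ℕ)
    (hF : ∀ i, DifferentiableAt ℝ (fun s => (F s).coeff i) t)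
    (hn : ∀ᶠ s in 𝓝 t, (F s).natDegree ≤ n) : ∃ F', PD F F' t := by
  refine ⟨∑ i ∈ Finset.range (n + 1), C (deriv (fun s => (F s).coeff i) t) * X ^ i, ?_, n, hn⟩
  intro i
  have h1 := (hF i).hasDerivAt
  simp only [finsetSum_coeff, coeff_C_mul, coeff_X_pow, mul_ite, mul_one, mul_zero,
    Finset.sum_ite_eq, Finset.mem_range]
  split_ifs with hi
  · exact h1
  · apply (hasDerivAt_const t (0 : ℝ)).congr_of_eventuallyEq
    filter_upwards [hn] with s hs
    exact coeff_eq_zero_of_natDegree_lt (by omega)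

variable {γ : ℝ} {m : ℕ} {p : ℝ → ℕ → ℝ[X]} {h : ℝ → ℕ → ℝ}

theorem L_deriv_const (hγ : 0 < γ) (hops : ∀ t : ℝ, γ < t → IsMonicOPS (wfun t γ m) (p t) (h t))
    {t : ℝ} (ht : γ < t) (f : ℝ[X]) :
    HasDerivAt (fun s => Lf γ m s f) (Lf γ m t (Qp m * f)) t := by
  obtain ⟨r, hr1, hr2⟩ := exists_between ht
  unfold Lf
  apply hasDerivAt_tsum_of_isPreconnected (t := Set.Ioi r)
    (g := fun (x : ℕ) s => f.eval (x : ℝ) * wfun s γ m x)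
    (g' := fun (x : ℕ) s => (Qp m * f).eval (x : ℝ) * wfun s γ m x)
    (u := fun x : ℕ => |(Qp m * f).eval (x : ℝ) * wfun r γ m x|)
    (L_summable (hops r hr1) (Qp m * f)).abs isOpen_Ioi isPreconnected_Ioi
    (y₀ := t) (y := t)
  · intro x s _
    have := (wfun_deriv s γ m x).const_mul (f.eval (x : ℝ))
    refine this.congr_deriv ?_
    rw [eval_mul]; ring
  · intro x s hs
    rw [Real.norm_eq_abs, abs_mul, abs_mul, abs_of_nonneg (wfun_nonneg s γ m x hγ),
      abs_of_nonneg (wfun_nonneg r γ m x hγ)]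
    exact mul_le_mul_of_nonneg_left (wfun_anti r s γ m x hγ (le_of_lt hs)) (abs_nonneg _)
  · exact hr2
  · exact L_summable (hops t ht) f
  · exact hr2

theorem L_expand {t : ℝ} {q : ℕ → ℝ[X]} {g : ℕ → ℝ} (H : IsMonicOPS (wfun t γ m) q g)
    (A f : ℝ[X]) (n : ℕ) (hf : f.natDegree ≤ n) :
    Lf γ m t (A * f) = ∑ i ∈ Finset.range (n + 1), f.coeff i * Lf γ m t (A * X ^ i) := by
  conv_lhs => rw [f.as_sum_range_C_mul_X_pow' (Nat.lt_succ_of_le hf)]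
  rw [Finset.mul_sum, L_sum H]
  apply Finset.sum_congr rfl
  intro i _
  rw [← L_C]; congr 1; ring

theorem L_deriv (hγ : 0 < γ) (hops : ∀ t : ℝ, γ < t → IsMonicOPS (wfun t γ m) (p t) (h t))
    {t : ℝ} (ht : γ < t) {F : ℝ → ℝ[X]} {F' : ℝ[X]} (hF : PD F F' t) :
    HasDerivAt (fun s => Lf γ m s (F s)) (Lf γ m t F' + Lf γ m t (Qp m * F t)) t := by
  obtain ⟨n, hn⟩ := hF.2
  have hn' : F'.natDegree ≤ n := by
    rw [natDegree_le_iff_coeff_eq_zero]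
    intro i hi
    refine (hF.1 i).unique ((hasDerivAt_const t (0 : ℝ)).congr_of_eventuallyEq ?_)
    filter_upwards [hn] with s hs
    exact coeff_eq_zero_of_natDegree_lt (by omega)
  have h1 : HasDerivAt (fun s => ∑ i ∈ Finset.range (n + 1), (F s).coeff i * Lf γ m s (1 * X ^ i))
      (∑ i ∈ Finset.range (n + 1), (F'.coeff i * Lf γ m t (1 * X ^ i) +
        (F t).coeff i * Lf γ m t (Qp m * (1 * X ^ i)))) t :=
    HasDerivAt.fun_sum (fun i _ => (hF.1 i).mul (L_deriv_const hγ hops ht _))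
  rw [Finset.sum_add_distrib, ← L_expand (hops t ht) 1 F' n hn'] at h1
  simp only [one_mul] at h1
  rw [← L_expand (hops t ht) (Qp m) (F t) n hn.self_of_nhds] at h1
  apply h1.congr_of_eventuallyEq
  filter_upwards [hn, lt_mem_nhds ht] with s hs hs2
  have := L_expand (hops s hs2) 1 (F s) n hs
  simpa using this

theorem p_deg (hops : ∀ t : ℝ, γ < t → IsMonicOPS (wfun t γ m) (p t) (h t))
    {t : ℝ} (ht : γ < t) (k : ℕ) : ∀ᶠ s in 𝓝 t, (p s k).natDegree ≤ k := by
  filter_upwards [lt_mem_nhds ht] with s hs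
  exact (((hops s hs).1 k).2).le

theorem p_PD (hγ : 0 < γ) (hops : ∀ t : ℝ, γ < t → IsMonicOPS (wfun t γ m) (p t) (h t))
    {t : ℝ} (ht : γ < t) (k : ℕ) : ∃ F', PD (fun s => p s k) F' t := by
  induction k using Nat.strong_induction_on with
  | _ k ih =>
  apply PD.exists k _ (p_deg hops ht k)
  intro i
  have h1 : DifferentiableAt ℝ (fun s => (X ^ k : ℝ[X]).coeff i - ∑ j ∈ Finset.range k,
      (Lf γ m s (X ^ k * p s j) / Lf γ m s (p s j * p s j)) * (p s j).coeff i) t := by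
    apply (differentiableAt_const _).sub
    apply DifferentiableAt.fun_sum
    intro j hj
    obtain ⟨F', hF⟩ := ih j (Finset.mem_range.1 hj)
    apply DifferentiableAt.mul
    · apply DifferentiableAt.div
      · exact (L_deriv hγ hops ht ((PD.const (X ^ k) t).mul hF)).differentiableAt
      · exact (L_deriv hγ hops ht (hF.mul hF)).differentiableAt
      · rw [L_qq (hops t ht), if_pos rfl]
        exact ((hops t ht).2.1 j).ne'
    · exact (hF.1 i).differentiableAt
  apply h1.congr_of_eventuallyEq
  filter_upwards [lt_mem_nhds ht] with s hs
  conv_lhs => rw [gram (hops s hs) k]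
  rw [coeff_sub, finsetSum_coeff]
  congr 1
  apply Finset.sum_congr rfl
  intro j _
  rw [coeff_C_mul, L_qq (hops s hs), if_pos rfl]

theorem p_PD' (hγ : 0 < γ) (hops : ∀ t : ℝ, γ < t → IsMonicOPS (wfun t γ m) (p t) (h t))
    {t : ℝ} (ht : γ < t) (k : ℕ) :
    ∃ F', PD (fun s => p s k) F' t ∧ ∀ i, k ≤ i → F'.coeff i = 0 := by
  obtain ⟨F', hF⟩ := p_PD hγ hops ht k
  refine ⟨F', hF, fun i hi => ?_⟩
  refine (hF.1 i).unique
    ((hasDerivAt_const t (if i = k then (1 : ℝ) else 0)).congr_of_eventuallyEq ?_)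
  filter_upwards [lt_mem_nhds ht] with s hs
  split_ifs with h1
  · subst h1; exact q_coeff_self (hops s hs) i
  · exact q_coeff_lt (hops s hs) k i (by omega)

theorem h_deriv (hγ : 0 < γ) (hops : ∀ t : ℝ, γ < t → IsMonicOPS (wfun t γ m) (p t) (h t))
    {t : ℝ} (ht : γ < t) (k : ℕ) :
    HasDerivAt (fun s => h s k) (-2 * ((X * p t k).coeff k - (X * p t (k + 1)).coeff (k + 1)
      + ((m : ℝ) + 1)) * h t k) t := by
  have H := hops t ht
  obtain ⟨F', hF, hd⟩ := p_PD' hγ hops ht k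
  have h1 := L_deriv hγ hops ht (hF.mul hF)
  have e1 : Lf γ m t (F' * p t k + p t k * F') = 0 := by
    rw [mul_comm (p t k) F', L_add H, L_lt H k F' hd, add_zero]
  have e2 : Lf γ m t ((X * p t k - p t (k + 1)) * p t k)
      = ((X * p t k).coeff k - (X * p t (k + 1)).coeff (k + 1)) * h t k := by
    rw [L_le H k]
    · rw [coeff_sub, coeff_X_mul]
    · intro i hi
      obtain ⟨i, rfl⟩ : ∃ j, i = j + 1 := ⟨i - 1, by omega⟩
      rw [coeff_sub, coeff_X_mul]
      rcases Nat.eq_or_lt_of_le (Nat.lt_succ_iff.1 hi) with rfl | hi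
      · rw [q_coeff_self H, q_coeff_self H, sub_self]
      · rw [q_coeff_lt H k i hi, q_coeff_lt H (k + 1) (i + 1) (by omega), sub_self]
  have e3 : Lf γ m t (p t (k + 1) * p t k) = 0 := by
    rw [L_qq H, if_neg (by omega)]
  have e4 : Lf γ m t (p t k * p t k) = h t k := by
    rw [L_qq H, if_pos rfl]
  have e5 : Qp m * (p t k * p t k) = C (-2) * ((X * p t k - p t (k + 1)) * p t k
      + p t (k + 1) * p t k + C ((m : ℝ) + 1) * (p t k * p t k)) := by
    unfold Qp; ring
  rw [e1, e5, L_C, L_add H, L_add H, L_C, e2, e3, e4] at h1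
  have h2 := h1.congr_of_eventuallyEq (f₁ := fun s => h s k) (by
    filter_upwards [lt_mem_nhds ht] with s hs
    rw [L_qq (hops s hs), if_pos rfl])
  refine h2.congr_deriv ?_
  ring

theorem c_deriv (hγ : 0 < γ) (hops : ∀ t : ℝ, γ < t → IsMonicOPS (wfun t γ m) (p t) (h t))
    {t : ℝ} (ht : γ < t) (n : ℕ) :
    HasDerivAt (fun s => (p s (n + 1)).coeff n) (2 * h t (n + 1) / h t n) t := by
  have H := hops t ht
  obtain ⟨F', hF, hd⟩ := p_PD' hγ hops ht (n + 1)
  obtain ⟨G', hG, hd2⟩ := p_PD' hγ hops ht n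
  have h1 := L_deriv hγ hops ht (hF.mul hG)
  have h2 := (hasDerivAt_const t (0 : ℝ)).congr_of_eventuallyEq
    (f₁ := fun s => Lf γ m s (p s (n + 1) * p s n)) (by
    filter_upwards [lt_mem_nhds ht] with s hs
    rw [L_qq (hops s hs), if_neg (by omega)])
  have h3 := h1.unique h2
  have e1 : Lf γ m t (F' * p t n) = F'.coeff n * h t n :=
    L_le H n F' (fun i hi => hd i hi)
  have e2 : Lf γ m t (p t (n + 1) * G') = 0 := by
    rw [mul_comm]; exact L_lt H _ _ (fun i hi => hd2 i (by omega))
  have e3 : Lf γ m t ((Qp m * p t n) * p t (n + 1)) = -2 * h t (n + 1) := by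
    have e : Qp m * p t n = C (-2) * (X * p t n + C ((m : ℝ) + 1) * p t n) := by
      unfold Qp; ring
    rw [e, L_le H]
    · rw [coeff_C_mul, coeff_add, coeff_X_mul, coeff_C_mul, q_coeff_self H,
        q_coeff_lt H n (n + 1) (by omega)]
      ring
    · intro i hi
      obtain ⟨i, rfl⟩ : ∃ j, i = j + 1 := ⟨i - 1, by omega⟩
      rw [coeff_C_mul, coeff_add, coeff_X_mul, coeff_C_mul, q_coeff_lt H n i (by omega),
        q_coeff_lt H n (i + 1) (by omega)]
      ring
  have e4 : Qp m * (p t (n + 1) * p t n) = (Qp m * p t n) * p t (n + 1) := by ring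
  rw [e4, e3, L_add H, e1, e2] at h3
  have hpos := H.2.1 n
  refine (hF.1 n).congr_deriv ?_
  rw [eq_comm, div_eq_iff hpos.ne']
  linarith

theorem log_deriv (hγ : 0 < γ) (hops : ∀ t : ℝ, γ < t → IsMonicOPS (wfun t γ m) (p t) (h t))
    {t : ℝ} (ht : γ < t) (N : ℕ) :
    HasDerivAt (fun s : ℝ => Real.log (∏ k ∈ Finset.range N, h s k))
      (2 * (X * p t N).coeff N - 2 * N * ((m : ℝ) + 1)) t := by
  induction N with
  | zero => simpa using hasDerivAt_const t (0 : ℝ)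
  | succ N ih =>
    have hpos := (hops t ht).2.1 N
    have h1 := ih.add ((h_deriv hγ hops ht N).log hpos.ne')
    rw [mul_div_cancel_right₀ _ hpos.ne'] at h1
    have h2 := h1.congr_of_eventuallyEq
      (f₁ := fun s : ℝ => Real.log (∏ k ∈ Finset.range (N + 1), h s k)) (by
      filter_upwards [lt_mem_nhds ht] with s hs
      rw [Finset.prod_range_succ, Real.log_mul
        (Finset.prod_pos (fun k _ => (hops s hs).2.1 k)).ne' ((hops s hs).2.1 N).ne']
      rfl)
    refine h2.congr_deriv ?_
    push_cast
    ring

end ana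

/-- The Toda equation for the normalizing constants regarded as functions of `t` on
`(γ, ∞)`: `(d²/dt²) ln ∏_{k=0}^{N-1} h_k(t) = 4 h_N(t)/h_{N-1}(t)` for every `N ≥ 1`. -/
theorem toda_equation (γ : ℝ) (m : ℕ) (hγ : 0 < γ)
    (p : ℝ → ℕ → Polynomial ℝ) (h : ℝ → ℕ → ℝ)
    (hops : ∀ t : ℝ, γ < t → IsMonicOPS (wfun t γ m) (p t) (h t))
    (N : ℕ) (hN : 1 ≤ N) (t : ℝ) (ht : γ < t) :
    iteratedDeriv 2 (fun s : ℝ => Real.log (∏ k ∈ Finset.range N, h s k)) t =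
      4 * h t N / h t (N - 1) := by
  obtain ⟨n, rfl⟩ : ∃ n, N = n + 1 := ⟨N - 1, by omega⟩
  rw [iteratedDeriv_succ, iteratedDeriv_one, Nat.add_sub_cancel]
  have h1 := ((c_deriv hγ hops ht n).const_mul 2).sub_const (2 * ((n + 1 : ℕ) : ℝ) * ((m : ℝ) + 1))
  have h2 := h1.congr_of_eventuallyEq
    (f₁ := deriv (fun s : ℝ => Real.log (∏ k ∈ Finset.range (n + 1), h s k))) (by
    filter_upwards [lt_mem_nhds ht] with s hs
    rw [(log_deriv hγ hops hs (n + 1)).deriv, Polynomial.coeff_X_mul])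
  rw [h2.deriv]
  ring

end SixVertex
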